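/- Let a, b ∈ ℂ with ab ≠ 0 and let f be the binary constraint (1, a, 0, b). Then Implies = (1,1,0,1) is T-constructible from {f, [1, a/b], [1, 1/a³]}. -/

import Mathlib

/-- A (complex-valued Boolean) constraint of arity `k`. -/
abbrev Constraint (k : ℕ) : Type := (Fin k → Bool) → ℂ

/-- The binary equality constraint `EQ = [1,0,1]`, as a two-argument function. -/
def EQc : Bool → Bool → ℂ := fun a b => if a = b then 1 else 0

/-- The binary disequality constraint `XOR = [0,1,0]`, as a two-argument function. -/
def XORc : Bool → Bool → ℂ := fun a b => if a = b then 0 else 1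

/-- The binary constraint `Implies = (1,1,0,1)`, as a two-argument function. -/
def IMPc : Bool → Bool → ℂ := fun a b => if a = true ∧ b = false then 0 else 1

/-- The unary constraint `[a, b]` (value `a` on input `0`, value `b` on input `1`). -/
def unC (a b : ℂ) : Constraint 1 := fun x => if x 0 then b else a

/-- The binary constraint `(a,b,c,d) = (f(0,0), f(0,1), f(1,0), f(1,1))`. -/
def binC (a b c d : ℂ) : Constraint 2 := fun x =>
  if x 0 then (if x 1 then d else c) else (if x 1 then b else a)

/-- `OR = [0,1,1]`. -/
def ORc : Constraint 2 := binC 0 1 1 1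

/-- `Implies = (1,1,0,1)` as a binary constraint. -/
def Impliesc : Constraint 2 := binC 1 1 0 1

/-- Membership in `NZ`: the constraint is everywhere nonzero. -/
def inNZ {k : ℕ} (f : Constraint k) : Prop := ∀ x, f x ≠ 0

/-- Membership in `DG`: the constraint is a product of unary constraints, one per variable. -/
def inDG {k : ℕ} (f : Constraint k) : Prop :=
  ∃ g : Fin k → Bool → ℂ, ∀ x, f x = ∏ i, g i (x i)

/-- Membership in `ED`: the constraint is a product of at least one factor, each factor
being a unary constraint applied to some variable, or `EQ`/`XOR` applied to two variables. -/
def inED {k : ℕ} (f : Constraint k) : Prop :=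
  ∃ (l1 l2 : ℕ) (h : Fin l1 → Bool → ℂ) (j : Fin l1 → Fin k)
    (g : Fin l2 → Bool → Bool → ℂ) (m n : Fin l2 → Fin k),
    1 ≤ l1 + l2 ∧ (∀ i, g i = EQc ∨ g i = XORc) ∧
    ∀ x, f x = (∏ i, h i (x (j i))) * ∏ i, g i (x (m i)) (x (n i))

/-- Membership in `IM`: `f ∉ NZ` and `f` is a product of at least one factor, each factor
being a unary constraint applied to some variable, or `Implies` applied to two variables. -/
def inIM {k : ℕ} (f : Constraint k) : Prop :=
  ¬ inNZ f ∧
  ∃ (l1 l2 : ℕ) (h : Fin l1 → Bool → ℂ) (j : Fin l1 → Fin k)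
    (m n : Fin l2 → Fin k),
    1 ≤ l1 + l2 ∧
    ∀ x, f x = (∏ i, h i (x (j i))) * ∏ i, IMPc (x (m i)) (x (n i))

/-- The underlying relation `R_f = {x : f x ≠ 0}` of a constraint `f`. -/
def relOf {k : ℕ} (f : Constraint k) : Set (Fin k → Bool) := {x | f x ≠ 0}

/-- Factors allowed in an IMP-style factorization of a relation:
`Δ_c(x_i)` or `Implies(x_i, x_j)`. -/
inductive ImpFactor (k : ℕ) where
  | delta (c : Bool) (i : Fin k)
  | imp (i j : Fin k)
deriving DecidableEq

/-- Evaluation of an IMP-factor at an assignment. -/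
def ImpFactor.eval {k : ℕ} : ImpFactor k → (Fin k → Bool) → Bool
  | .delta c i, x => x i == c
  | .imp i j, x => !(x i) || x j

/-- `L` is a factor list for the relation `R`: the conjunction of the factors in `L` equals `R`. -/
def isFactorListFor {k : ℕ} (L : List (ImpFactor k)) (R : Set (Fin k → Bool)) : Prop :=
  ∀ x, x ∈ R ↔ ∀ fac ∈ L, fac.eval x = true

/-- Membership in `IMP`: the relation is the conjunction of a positive number of factors of the
forms `Δ_0(x)`, `Δ_1(x)`, `Implies(x,y)`. -/
def inIMP {k : ℕ} (R : Set (Fin k → Bool)) : Prop :=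
  ∃ L : List (ImpFactor k), L ≠ [] ∧ isFactorListFor L R

/-- `f` has imp support when `R_f ∈ IMP`. -/
def hasImpSupport {k : ℕ} (f : Constraint k) : Prop := inIMP (relOf f)

/-- A factor list is imp-distinctive if no variable occurs both in a `Δ_c` factor and in an
`Implies` factor, and no factor `Implies(x,x)` occurs. -/
def impDistinctive {k : ℕ} (L : List (ImpFactor k)) : Prop :=
  (∀ i : Fin k, ¬ ((∃ c, ImpFactor.delta c i ∈ L) ∧
      (∃ j, ImpFactor.imp i j ∈ L ∨ ImpFactor.imp j i ∈ L))) ∧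
  (∀ i : Fin k, ImpFactor.imp i i ∉ L)

/-- Factors of the forms `Δ_c(x_i)` or `EQ(x_i,x_j)`. -/
inductive EqFactor (k : ℕ) where
  | delta (c : Bool) (i : Fin k)
  | eq (i j : Fin k)
deriving DecidableEq

/-- Evaluation of such a factor at an assignment. -/
def EqFactor.eval {k : ℕ} : EqFactor k → (Fin k → Bool) → Bool
  | .delta c i, x => x i == c
  | .eq i j, x => x i == x j

/-- `f` is in simple form: its representing Boolean matrix (rows indexed by `R_f`) has
no all-`0` column, no all-`1` column, and no two identical columns. -/
def simpleForm {k : ℕ} (f : Constraint k) : Prop :=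
  (∀ i : Fin k, ∃ a, f a ≠ 0 ∧ a i = true) ∧
  (∀ i : Fin k, ∃ a, f a ≠ 0 ∧ a i = false) ∧
  (∀ i j : Fin k, i ≠ j → ∃ a, f a ≠ 0 ∧ a i ≠ a j)

/-- A constraint of unspecified arity. -/
abbrev Ctr : Type := Σ k : ℕ, Constraint k

/-- T-constructibility of a constraint from a set `G` of constraints, by finitely many
applications of permutation, pinning, projection, linking, expansion, multiplication,
and normalization. -/
inductive TCon (G : Set Ctr) : Ctr → Prop where
  | base {c : Ctr} : c ∈ G → TCon G c
  | perm {k : ℕ} {g : Constraint k} (σ : Equiv.Perm (Fin k)) :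
      TCon G ⟨k, g⟩ → TCon G ⟨k, fun x => g (fun i => x (σ i))⟩
  | pinning {k : ℕ} {g : Constraint (k+1)} (i : Fin (k+1)) (c : Bool) :
      TCon G ⟨k+1, g⟩ → TCon G ⟨k, fun x => g (i.insertNth c x)⟩
  | proj {k : ℕ} {g : Constraint (k+1)} (i : Fin (k+1)) :
      TCon G ⟨k+1, g⟩ →
      TCon G ⟨k, fun x => g (i.insertNth false x) + g (i.insertNth true x)⟩
  | link {k : ℕ} {g : Constraint (k+1)} (i : Fin (k+1)) (j : Fin k) :
      TCon G ⟨k+1, g⟩ → TCon G ⟨k, fun x => g (i.insertNth (x j) x)⟩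
  | expand {k : ℕ} {g : Constraint k} (i : Fin (k+1)) :
      TCon G ⟨k, g⟩ → TCon G ⟨k+1, fun x => g (fun j => x (i.succAbove j))⟩
  | mul {k : ℕ} {g₁ g₂ : Constraint k} :
      TCon G ⟨k, g₁⟩ → TCon G ⟨k, g₂⟩ → TCon G ⟨k, fun x => g₁ x * g₂ x⟩
  | norm {k : ℕ} {g : Constraint k} (lam : ℂ) (hlam : lam ≠ 0) :
      TCon G ⟨k, g⟩ → TCon G ⟨k, fun x => lam * g x⟩

/-- T-constructibility using no projection operation. -/
inductive TConNoProj (G : Set Ctr) : Ctr → Prop where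
  | base {c : Ctr} : c ∈ G → TConNoProj G c
  | perm {k : ℕ} {g : Constraint k} (σ : Equiv.Perm (Fin k)) :
      TConNoProj G ⟨k, g⟩ → TConNoProj G ⟨k, fun x => g (fun i => x (σ i))⟩
  | pinning {k : ℕ} {g : Constraint (k+1)} (i : Fin (k+1)) (c : Bool) :
      TConNoProj G ⟨k+1, g⟩ → TConNoProj G ⟨k, fun x => g (i.insertNth c x)⟩
  | link {k : ℕ} {g : Constraint (k+1)} (i : Fin (k+1)) (j : Fin k) :
      TConNoProj G ⟨k+1, g⟩ → TConNoProj G ⟨k, fun x => g (i.insertNth (x j) x)⟩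
  | expand {k : ℕ} {g : Constraint k} (i : Fin (k+1)) :
      TConNoProj G ⟨k, g⟩ → TConNoProj G ⟨k+1, fun x => g (fun j => x (i.succAbove j))⟩
  | mul {k : ℕ} {g₁ g₂ : Constraint k} :
      TConNoProj G ⟨k, g₁⟩ → TConNoProj G ⟨k, g₂⟩ →
      TConNoProj G ⟨k, fun x => g₁ x * g₂ x⟩
  | norm {k : ℕ} {g : Constraint k} (lam : ℂ) (hlam : lam ≠ 0) :
      TConNoProj G ⟨k, g⟩ → TConNoProj G ⟨k, fun x => lam * g x⟩

/-- Pinning the `i`-th variable of `f` to the bit `c`. -/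
def pinC {k : ℕ} (f : Constraint (k+1)) (i : Fin (k+1)) (c : Bool) : Constraint k :=
  fun x => f (i.insertNth c x)

/-- `R_f` admits a good factor list: a factor list consisting only of `Implies` factors,
in which every variable is incident to at least one edge of the induced imp graph,
and whose imp graph has no (directed) cycle. -/
def hasGoodFactorList {k : ℕ} (f : Constraint k) : Prop :=
  ∃ L : List (ImpFactor k),
    isFactorListFor L (relOf f) ∧
    (∀ fac ∈ L, ∃ i j, fac = ImpFactor.imp i j) ∧
    (∀ i : Fin k, ∃ j, ImpFactor.imp i j ∈ L ∨ ImpFactor.imp j i ∈ L) ∧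
    ¬ ∃ i : Fin k, Relation.TransGen (fun a b => ImpFactor.imp a b ∈ L) i i

/-!
Weighting the two variables of `f = (1, a, 0, b)` by `[1, a/b]` and `[1, 1/a]` turns the entries
`a` and `b` into `1`. The second weight is `[1, a]² · [1, 1/a³]`, where `[1, a]` is `f` with its
first variable pinned to `0`.
-/

theorem unC_mul_unC (a b c d : ℂ) :
    (fun x => unC a b x * unC c d x) = unC (a * c) (b * d) := by
  funext x
  cases h : x 0 <;> simp [unC, h]

theorem binC_mul_unC_mul_unC (p q r s u₀ u₁ v₀ v₁ : ℂ) :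
    (fun x => binC p q r s x * unC u₀ u₁ (fun _ => x 0) * unC v₀ v₁ (fun _ => x 1)) =
      binC (p * u₀ * v₀) (q * u₀ * v₁) (r * u₁ * v₀) (s * u₁ * v₁) := by
  funext x
  cases h₀ : x 0 <;> cases h₁ : x 1 <;> simp [binC, unC, h₀, h₁]

theorem pinC_binC_zero_false (p q r s : ℂ) : pinC (binC p q r s) 0 false = unC p q := by
  funext x
  simp [pinC, binC, unC, Fin.insertNth_apply_same]

namespace TCon

variable {G : Set Ctr} {k m : ℕ}

theorem comp_bijective {g : Constraint m} {e : Fin m → Fin k} (he : Function.Bijective e)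
    (hg : TCon G ⟨m, g⟩) : TCon G ⟨k, fun x => g fun i => x (e i)⟩ := by
  obtain rfl : m = k := by simpa using Fintype.card_of_bijective he
  exact hg.perm (Equiv.ofBijective e he)

theorem comp_injective {g : Constraint m} {e : Fin m → Fin k} (he : Function.Injective e)
    (hg : TCon G ⟨m, g⟩) : TCon G ⟨k, fun x => g fun i => x (e i)⟩ := by
  induction k generalizing m with
  | zero => exact hg.comp_bijective ⟨he, fun i => i.elim0⟩
  | succ k ih =>
    by_cases hsurj : Function.Surjective e
    · exact hg.comp_bijective ⟨he, hsurj⟩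
    · obtain ⟨j, hj⟩ := not_forall.mp hsurj
      choose e' he' using fun i => Fin.exists_succAbove_eq fun h : e i = j => hj ⟨i, h⟩
      obtain rfl : e = j.succAbove ∘ e' := funext fun i => (he' i).symm
      exact (ih he.of_comp hg).expand j

theorem mul_unary {g : Constraint k} {u : Constraint 1} (i : Fin k) (hg : TCon G ⟨k, g⟩)
    (hu : TCon G ⟨1, u⟩) : TCon G ⟨k, fun x => g x * u fun _ => x i⟩ :=
  hg.mul (hu.comp_injective (Function.injective_of_subsingleton fun _ => i))

theorem unC_of_binC {p q r s : ℂ} (h : TCon G ⟨2, binC p q r s⟩) : TCon G ⟨1, unC p q⟩ :=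
  pinC_binC_zero_false p q r s ▸ h.pinning 0 false

theorem unC_mul {a b c d : ℂ} (h₁ : TCon G ⟨1, unC a b⟩) (h₂ : TCon G ⟨1, unC c d⟩) :
    TCon G ⟨1, unC (a * c) (b * d)⟩ :=
  unC_mul_unC a b c d ▸ h₁.mul h₂

theorem binC_mul_unC {p q r s u₀ u₁ v₀ v₁ : ℂ} (hf : TCon G ⟨2, binC p q r s⟩)
    (hu : TCon G ⟨1, unC u₀ u₁⟩) (hv : TCon G ⟨1, unC v₀ v₁⟩) :
    TCon G ⟨2, binC (p * u₀ * v₀) (q * u₀ * v₁) (r * u₁ * v₀) (s * u₁ * v₁)⟩ :=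
  binC_mul_unC_mul_unC p q r s u₀ u₁ v₀ v₁ ▸ (hf.mul_unary 0 hu).mul_unary 1 hv

end TCon

/-- For `a, b ∈ ℂ` with `ab ≠ 0` and `f = (1,a,0,b)`, the constraint
`Implies = (1,1,0,1)` is T-constructible from `{f, [1,a/b], [1,1/a³]}`. -/
theorem stmt7 (a b : ℂ) (hab : a * b ≠ 0) :
    TCon ({⟨2, binC 1 a 0 b⟩, ⟨1, unC 1 (a / b)⟩, ⟨1, unC 1 (1 / a ^ 3)⟩} : Set Ctr)
      ⟨2, Impliesc⟩ := by
  have ha : a ≠ 0 := left_ne_zero_of_mul hab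
  have hb : b ≠ 0 := right_ne_zero_of_mul hab
  set G : Set Ctr := {⟨2, binC 1 a 0 b⟩, ⟨1, unC 1 (a / b)⟩, ⟨1, unC 1 (1 / a ^ 3)⟩} with hG
  have hf : TCon G ⟨2, binC 1 a 0 b⟩ := .base (by simp [hG])
  have hu : TCon G ⟨1, unC 1 (a / b)⟩ := .base (by simp [hG])
  have hw : TCon G ⟨1, unC 1 (1 / a ^ 3)⟩ := .base (by simp [hG])
  have hinv : TCon G ⟨1, unC 1 a⁻¹⟩ := by
    have hpow : a * a * (1 / a ^ 3) = a⁻¹ := by field_simp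
    simpa only [one_mul, hpow] using (hf.unC_of_binC.unC_mul hf.unC_of_binC).unC_mul hw
  have hone : b * (a / b) * a⁻¹ = 1 := by field_simp
  simpa only [Impliesc, one_mul, mul_one, zero_mul, mul_inv_cancel₀ ha, hone] using
    hf.binC_mul_unC hu hinv
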